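/- Let u, w be ternary words over {0,1,2} with val_F(u) = val_F(w). Then val_F(u·0) − val_F(w·0) ∈ {−1, 0, +1}, i.e., appending the digit 0 to both words changes the difference of Fibonacci values by at most 1 in absolute value. -/

import Mathlib

/-- Fibonacci sequence with F 0 = 1, F 1 = 2. -/
def F (n : ℕ) : ℕ := Nat.fib (n + 2)

/-- Fibonacci extended to integer indices ≥ -2, with F_{-2} = 0, F_{-1} = 1. -/
def Fz (m : ℤ) : ℤ := ((m + 2).toNat.fib : ℤ)

/-- Fibonacci value of a word (most significant digit first):
`valF (w_{k-1} ⋯ w_0) = ∑ w_i F_i`. -/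
def valF : List ℕ → ℕ
  | [] => 0
  | a :: t => a * F t.length + valF t

/-- Fibonacci's complement value:
`valFc (w_{k-1} ⋯ w_0) = ∑ w_i F_i − w_{k-1} F_k`. -/
def valFc (w : List ℕ) : ℤ :=
  (valF w : ℤ) - (w.headD 0 : ℤ) * (F w.length : ℤ)

theorem valF_snoc (u : List ℕ) (a : ℕ) : valF (u ++ [a]) = valF (u ++ [0]) + a := by
  induction u with
  | nil => simp [valF, F]
  | cons b t ih =>
    simp only [List.cons_append, valF, List.length_append, List.length_singleton, ih]
    ring

theorem valF_snoc_snoc (u : List ℕ) (a : ℕ) :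
    valF (u ++ [a] ++ [0]) = valF (u ++ [0]) + valF u + 2 * a := by
  induction u with
  | nil => simp [valF, F, Nat.fib]; ring
  | cons b t ih =>
    have hF : F (t.length + 1 + 1) = F t.length + F (t.length + 1) := by
      unfold F; exact Nat.fib_add_two
    simp only [List.cons_append, valF, List.length_append, List.length_singleton, ih, hF]
    ring

theorem valF_bound (s : ℝ) (hs : s ^ 2 = s + 1) (h1 : -1 < s) (h0 : s < 0) (u : List ℕ)
    (hu : ∀ x ∈ u, x ≤ 2) :
    -2 * s ^ 2 < (valF (u ++ [0]) : ℝ) - (1 - s) * valF u ∧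
      (valF (u ++ [0]) : ℝ) - (1 - s) * valF u < -2 * s := by
  induction u using List.reverseRecOn with
  | nil => simp [valF]; constructor <;> nlinarith
  | append_singleton t a ih =>
    obtain ⟨l, r⟩ := ih (fun x hx => hu x (by simp [hx]))
    have ha : (a : ℝ) ≤ 2 := by exact_mod_cast hu a (by simp)
    have ha0 : (0 : ℝ) ≤ a := Nat.cast_nonneg a
    rw [valF_snoc_snoc, valF_snoc t a]
    push_cast
    generalize (valF (t ++ [0]) : ℝ) = y at *
    generalize (valF t : ℝ) = x at *
    have e : y + x + 2 * a - (1 - s) * (y + a) = s * (y - (1 - s) * x) + s ^ 2 * a := by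
      linear_combination (-x - a) * hs
    rw [e]
    generalize y - (1 - s) * x = E at *
    have hl := mul_lt_mul_of_neg_left l h0
    have hr := mul_lt_mul_of_neg_left r h0
    have p1 : 0 ≤ s ^ 2 * a := by positivity
    have p2 : s ^ 2 * a ≤ s ^ 2 * 2 := by gcongr
    have h3 : s * (-2 * s ^ 2) = -2 * s - 2 * s ^ 2 := by linear_combination (-2 * s) * hs
    constructor <;> nlinarith

theorem append_zero_diff (u w : List ℕ) (hu : ∀ x ∈ u, x ≤ 2) (hw : ∀ x ∈ w, x ≤ 2)
    (h : valF u = valF w) :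
    (valF (u ++ [0]) : ℤ) - (valF (w ++ [0]) : ℤ) ∈ ({-1, 0, 1} : Set ℤ) := by
  have hq : Real.sqrt 5 ^ 2 = 5 := Real.sq_sqrt (by norm_num)
  have hp : 0 ≤ Real.sqrt 5 := Real.sqrt_nonneg 5
  obtain ⟨s, hs, h1, h0⟩ : ∃ s : ℝ, s ^ 2 = s + 1 ∧ -1 < s ∧ s < 0 :=
    ⟨(1 - Real.sqrt 5) / 2, by nlinarith, by nlinarith, by nlinarith⟩
  obtain ⟨lu, ru⟩ := valF_bound s hs h1 h0 u hu
  obtain ⟨lw, rw'⟩ := valF_bound s hs h1 h0 w hw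
  rw [h] at lu ru
  have a1 : ((valF (u ++ [0]) : ℤ) : ℝ) - ((valF (w ++ [0]) : ℤ) : ℝ) < 2 := by
    push_cast; linarith
  have a2 : -2 < ((valF (u ++ [0]) : ℤ) : ℝ) - ((valF (w ++ [0]) : ℤ) : ℝ) := by
    push_cast; linarith
  have b1 : (valF (u ++ [0]) : ℤ) - (valF (w ++ [0]) : ℤ) < 2 := by exact_mod_cast a1
  have b2 : -2 < (valF (u ++ [0]) : ℤ) - (valF (w ++ [0]) : ℤ) := by exact_mod_cast a2
  simp only [Set.mem_insert_iff, Set.mem_singleton_iff]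
  omega
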